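/- arXiv:1503.05531 — 11 statements merged into one kernel-verified Lean document; each statement's English description precedes it below -/
import Mathlib

section
/- Let F be a filter on a set X. For every subset A ⊆ X: (A ∪ U ∈ F for every cofinite subset U ⊆ X) if and only if ℓ(F) ⊆ A. (That is, the Heyting implication cK(X) → F in the lattice of filters on X equals the principal filter U(ℓ(F)) of all supersets of ℓ(F), and this operation is the double negation in Filt(X).) -/
/-!
A filter `F` contains the cofinite set `{x}ᶜ` exactly when `x ∉ F.ker`. Testing the left-hand
condition on `U = {x}ᶜ` for `x ∈ F.ker` therefore forces `x ∈ A`. Conversely, if `F.ker ⊆ A` and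
`U` is cofinite, then `A ∪ U` omits only finitely many points, none of them in `F.ker`, so it is a
finite intersection of members `{x}ᶜ` of `F` (`Filter.biInter_mem`).
-/

/-- For a filter `F` on `X` and `A ⊆ X`: `A ∪ U ∈ F` for every cofinite `U ⊆ X`
iff `ℓ(F) ⊆ A`.  (The Heyting implication `cK(X) → F` equals `U(ℓ(F))`, and this
operation is the double negation in `Filt(X)`.) -/
theorem double_negation_filt {X : Type*} (F : Filter X) (A : Set X) :
    (∀ U : Set X, Uᶜ.Finite → A ∪ U ∈ F) ↔ F.ker ⊆ A := by
  constructor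
  · intro h x hx
    have hmem : x ∈ A ∪ {x}ᶜ := Filter.mem_ker.1 hx _ (h {x}ᶜ (by simp))
    simpa using hmem
  · intro h U hU
    -- `A ∪ U` is the intersection of the sets `{x}ᶜ` over the finite set `Uᶜ \ A`, and each
    -- of these lies in `F` because `x ∉ F.ker`.
    have hfin : (Uᶜ \ A).Finite := hU.subset Set.sdiff_subset
    have hmem : (⋂ x ∈ Uᶜ \ A, ({x}ᶜ : Set X)) ∈ F := by
      refine (Filter.biInter_mem hfin).2 fun x hx => ?_
      have hker : x ∉ F.ker := fun hk => hx.2 (h hk)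
      simp only [Filter.mem_ker, not_forall] at hker
      obtain ⟨S, hS, hxS⟩ := hker
      exact Filter.mem_of_superset hS (Set.subset_compl_singleton_iff.2 hxS)
    refine Filter.mem_of_superset hmem fun y hy => ?_
    by_contra hyAU
    rw [Set.mem_union, not_or] at hyAU
    exact Set.mem_iInter₂.1 hy y ⟨hyAU.2, hyAU.1⟩ rfl
end

section
/- Let F be a filter on a set X. Every member of F is cofinite if and only if F equals the filter C(ℓ(F)) of all cofinite subsets of X containing ℓ(F). (This identifies the filters contained in cK(X) with the image of the embedding C : P(X)^op → Filt(X).) -/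
/-- A cofinite set containing the kernel of an arbitrary filter belongs to that filter: each of the
finitely many points outside `s` is missed by some member, and intersecting these members gives a
member contained in `s`. -/
lemma mem_of_finite_compl_of_ker_subset {X : Type*} {F : Filter X} {s : Set X}
    (hs : sᶜ.Finite) (hker : F.ker ⊆ s) : s ∈ F := by
  have h : ∀ x ∈ sᶜ, ∃ t ∈ F, x ∉ t := by
    intro x hx
    by_contra! hall
    exact hx (hker (Filter.mem_ker.2 hall))
  choose! t htF hxt using h
  filter_upwards [(Filter.biInter_mem hs).2 htF] with y hy
  by_contra hys
  exact hxt y hys (Set.mem_iInter₂.1 hy y hys)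

/-- Every member of a filter `F` on `X` is cofinite iff `F` equals the filter
`C(ℓ(F))` of all cofinite subsets of `X` containing `ℓ(F)`. -/
theorem subset_cofinite_iff_eq_C_ker {X : Type*} (F : Filter X) :
    (∀ s ∈ F, sᶜ.Finite) ↔
      (∀ s : Set X, s ∈ F ↔ (sᶜ.Finite ∧ F.ker ⊆ s)) := by
  refine ⟨fun h s => ⟨fun hs => ⟨h s hs, Set.sInter_subset_of_mem hs⟩, fun hs => ?_⟩,
    fun h s hs => ((h s).1 hs).1⟩
  exact mem_of_finite_compl_of_ker_subset hs.1 hs.2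
end

section
/- Let I be a right ideal of the monoid M of finite-fiber maps ℕ → ℕ. Then I is ¬¬-dense (i.e., for every finite-fiber f : ℕ → ℕ there exists a finite-fiber g : ℕ → ℕ with f ∘ g ∈ I) if and only if for every finite-fiber f : ℕ → ℕ there exists g ∈ I such that range(f) ∩ range(g) is infinite. -/
/-!
The maps of `I` have finite fibers, so they have infinite range. Hence if `f ∘ g ∈ I`, then
`f ∘ g` itself is an element of `I` whose range meets that of `f` infinitely often.
Conversely, an injective enumeration `s` of an infinite set `range f ∩ range g` with `g ∈ I` lifts
along `f` and along `g` to injective maps `a` and `b`, and `f ∘ a = s = g ∘ b` lies in `I`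
because `I` is a right ideal.
-/

/-- A map `f : ℕ → ℕ` has finite fibers if every fiber is finite. -/
def FiniteFibers (f : ℕ → ℕ) : Prop := ∀ n : ℕ, (f ⁻¹' {n}).Finite

theorem FiniteFibers.infinite_range {h : ℕ → ℕ} (hh : FiniteFibers h) :
    (Set.range h).Infinite := by
  intro hfin
  have hpre := Set.Finite.preimage' hfin fun b _ => hh b
  rw [Set.preimage_range] at hpre
  exact Set.infinite_univ hpre

theorem Function.Injective.finiteFibers {h : ℕ → ℕ} (hh : Function.Injective h) :
    FiniteFibers h :=
  fun n => (Set.finite_singleton n).preimage hh.injOn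

/-- A right ideal `I` of the monoid `M` of finite-fiber maps `ℕ → ℕ` is
¬¬-dense iff for every `f ∈ M` there is `g ∈ I` with `range f ∩ range g`
infinite. -/
theorem dense_iff_ranges_meet_infinitely (I : Set (ℕ → ℕ))
    (hIM : ∀ f ∈ I, FiniteFibers f)
    (hI : ∀ f ∈ I, ∀ g : ℕ → ℕ, FiniteFibers g → f ∘ g ∈ I) :
    (∀ f : ℕ → ℕ, FiniteFibers f → ∃ g : ℕ → ℕ, FiniteFibers g ∧ f ∘ g ∈ I) ↔
      (∀ f : ℕ → ℕ, FiniteFibers f →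
        ∃ g ∈ I, (Set.range f ∩ Set.range g).Infinite) := by
  constructor
  · intro H f hf
    obtain ⟨g, -, hfg⟩ := H f hf
    refine ⟨f ∘ g, hfg, ?_⟩
    rw [Set.inter_eq_right.2 (Set.range_comp_subset_range g f)]
    exact (hIM _ hfg).infinite_range
  · intro H f hf
    obtain ⟨g, hg, hinf⟩ := H f hf
    let s := hinf.natEmbedding
    have hs : Function.Injective fun n => (s n : ℕ) :=
      Subtype.val_injective.comp s.injective
    choose a ha using fun n => (s n).2.1
    choose b hb using fun n => (s n).2.2
    have hfa : f ∘ a = fun n => (s n : ℕ) := funext ha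
    have hgb : g ∘ b = fun n => (s n : ℕ) := funext hb
    have ha_inj : Function.Injective a := Function.Injective.of_comp (f := f) (hfa ▸ hs)
    have hb_inj : Function.Injective b := Function.Injective.of_comp (f := g) (hgb ▸ hs)
    refine ⟨a, ha_inj.finiteFibers, ?_⟩
    rw [hfa, ← hgb]
    exact hI g hg b hb_inj.finiteFibers
end

section
/- For a subset A ⊆ ℕ: (i) A is finite if and only if there is no finite-fiber map f : ℕ → ℕ with range(f) ⊆ A; (ii) A is cofinite (i.e., ℕ \ A is finite) if and only if for every finite-fiber map f : ℕ → ℕ there exists a finite-fiber map g : ℕ → ℕ such that range(f ∘ g) ⊆ A. (That is, A is cofinite iff the ideal Cont(A) belongs to the double negation topology on M.) -/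
/-- The fact behind both parts: if `A` is infinite, an enumeration of `A` without repetition has
finite fibers; conversely a finite-fiber map with finite range would have a finite domain. -/
theorem exists_finiteFibers_iff_infinite (A : Set ℕ) :
    (∃ f : ℕ → ℕ, FiniteFibers f ∧ Set.range f ⊆ A) ↔ A.Infinite := by
  constructor
  · rintro ⟨f, hf, hfA⟩ hA
    refine Set.infinite_univ (α := ℕ) ((hA.preimage' fun n _ => hf n).subset fun n _ => ?_)
    exact hfA ⟨n, rfl⟩
  · intro hA
    refine ⟨fun n => hA.natEmbedding A n, fun n => ?_, ?_⟩
    · exact (Set.finite_singleton n).preimage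
        (Subtype.val_injective.comp (hA.natEmbedding A).injective).injOn
    · rintro _ ⟨n, rfl⟩
      exact (hA.natEmbedding A n).2

/-- For `A ⊆ ℕ`: (i) `A` is finite iff no finite-fiber map has range in `A`;
(ii) `A` is cofinite iff `Cont(A)` is ¬¬-dense in the monoid `M` of
finite-fiber endomaps of `ℕ`. -/
theorem finite_cofinite_via_content (A : Set ℕ) :
    (A.Finite ↔ ¬ ∃ f : ℕ → ℕ, FiniteFibers f ∧ Set.range f ⊆ A) ∧
    ((Aᶜ).Finite ↔ ∀ f : ℕ → ℕ, FiniteFibers f →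
      ∃ g : ℕ → ℕ, FiniteFibers g ∧ Set.range (f ∘ g) ⊆ A) := by
  refine ⟨by rw [exists_finiteFibers_iff_infinite, Set.not_infinite],
    fun hA f hf => ?_, fun h => ?_⟩
  -- The complement of the preimage of `A` is a finite union of fibers, so it is finite.
  · have hfin : (f ⁻¹' A)ᶜ.Finite := hA.preimage' fun n _ => hf n
    obtain ⟨g, hg, hgA⟩ := (exists_finiteFibers_iff_infinite (f ⁻¹' A)).2
      (compl_compl (f ⁻¹' A) ▸ hfin.infinite_compl)
    exact ⟨g, hg, by rintro _ ⟨n, rfl⟩; exact hgA ⟨n, rfl⟩⟩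
  -- A finite-fiber map into an infinite `Aᶜ` cannot be precomposed to land in `A`.
  · by_contra hA
    obtain ⟨f, hf, hfA⟩ := (exists_finiteFibers_iff_infinite Aᶜ).2 hA
    obtain ⟨g, -, hgA⟩ := h f hf
    exact hfA ⟨g 0, rfl⟩ (hgA ⟨0, rfl⟩)
end

section
/- A subset A ⊆ ℕ is infinite if and only if its content Cont(A) is a principal right ideal of M; that is, if and only if there exists a finite-fiber map u : ℕ → ℕ such that for every finite-fiber map f : ℕ → ℕ one has: range(f) ⊆ A if and only if f = u ∘ g for some finite-fiber map g : ℕ → ℕ. -/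
/-- `A ⊆ ℕ` is infinite iff its content `Cont(A)` is a principal right ideal
of the monoid `M` of finite-fiber endomaps of `ℕ`. -/
theorem infinite_iff_content_principal (A : Set ℕ) :
    A.Infinite ↔
      ∃ u : ℕ → ℕ, FiniteFibers u ∧
        ∀ f : ℕ → ℕ, FiniteFibers f →
          (Set.range f ⊆ A ↔ ∃ g : ℕ → ℕ, FiniteFibers g ∧ f = u ∘ g) := by
  constructor
  · intro hA
    refine ⟨Nat.nth (· ∈ A), fun n => ?_, fun f hf => ⟨fun h => ?_, ?_⟩⟩
    · exact (Set.finite_singleton n).preimage (Nat.nth_injective hA).injOn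
    · have hlift : ∀ k, ∃ m, Nat.nth (· ∈ A) m = f k := fun k => by
        have hk : f k ∈ Set.range (Nat.nth (· ∈ A)) :=
          (Nat.range_nth_of_infinite (p := (· ∈ A)) hA).ge (h ⟨k, rfl⟩)
        exact hk
      choose g hg using hlift
      refine ⟨g, fun n => (hf (Nat.nth (· ∈ A) n)).subset ?_, funext fun k => (hg k).symm⟩
      rintro k rfl
      exact (hg k).symm
    · rintro ⟨g, -, rfl⟩ _ ⟨k, rfl⟩
      exact Nat.nth_mem_of_infinite (p := (· ∈ A)) hA (g k)
  · rintro ⟨u, hu, h⟩ hA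
    have hrange : Set.range u ⊆ A :=
      (h u hu).2 ⟨id, fun n => Set.finite_singleton n, rfl⟩
    have hfin : (u ⁻¹' A).Finite := hA.preimage' fun n _ => hu n
    exact Set.infinite_univ (hfin.subset fun k _ => hrange ⟨k, rfl⟩)
end

section
/- Let I be a right ideal of the monoid M of finite-fiber maps ℕ → ℕ. Then (for every finite-fiber f : ℕ → ℕ there exists a finite-fiber g : ℕ → ℕ with f ∘ g ∈ I) if and only if (for every strictly monotone u : ℕ → ℕ there exists a strictly monotone v : ℕ → ℕ with u ∘ v ∈ I). (That is, I is ¬¬-dense in M if and only if I ∩ E is ¬¬-dense in E.) -/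
theorem FiniteFibers.exists_strictMono_comp {f : ℕ → ℕ} (hf : FiniteFibers f) :
    ∃ φ : ℕ → ℕ, StrictMono φ ∧ StrictMono (f ∘ φ) := by
  apply Filter.strictMono_subseq_of_tendsto_atTop
  rw [← Nat.cofinite_eq_atTop]
  exact Filter.Tendsto.cofinite_of_finite_preimage_singleton hf

theorem FiniteFibers.of_strictMono {f : ℕ → ℕ} (hf : StrictMono f) : FiniteFibers f :=
  fun n => (Set.finite_singleton n).preimage hf.injective.injOn

/-- A right ideal `I` of the monoid `M` of finite-fiber endomaps of `ℕ` is
¬¬-dense in `M` iff `I ∩ E` is ¬¬-dense in the submonoid `E` of strictly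
monotone maps. -/
theorem dense_in_M_iff_dense_in_E (I : Set (ℕ → ℕ))
    (hIM : ∀ f ∈ I, FiniteFibers f)
    (hI : ∀ f ∈ I, ∀ g : ℕ → ℕ, FiniteFibers g → f ∘ g ∈ I) :
    (∀ f : ℕ → ℕ, FiniteFibers f → ∃ g : ℕ → ℕ, FiniteFibers g ∧ f ∘ g ∈ I) ↔
      (∀ u : ℕ → ℕ, StrictMono u → ∃ v : ℕ → ℕ, StrictMono v ∧ u ∘ v ∈ I) := by
  constructor
  · intro h u hu
    obtain ⟨g, hg, hgI⟩ := h u (.of_strictMono hu)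
    obtain ⟨φ, hφ, hgφ⟩ := hg.exists_strictMono_comp
    exact ⟨g ∘ φ, hgφ, hI _ hgI φ (.of_strictMono hφ)⟩
  · intro h f hf
    obtain ⟨φ, hφ, hfφ⟩ := hf.exists_strictMono_comp
    obtain ⟨v, hv, hvI⟩ := h _ hfφ
    exact ⟨φ ∘ v, .of_strictMono (hφ.comp hv), hvI⟩
end

section
/- For a subset A ⊆ ℕ: A is cofinite (i.e., ℕ \ A is finite) if and only if for every strictly monotone map u : ℕ → ℕ there exists a strictly monotone map v : ℕ → ℕ such that range(u ∘ v) ⊆ A. (That is, A is cofinite iff Cont_E(A) belongs to the double negation topology on E.) -/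
/-- `A ⊆ ℕ` is cofinite iff for every strictly monotone `u : ℕ → ℕ` there is a
strictly monotone `v : ℕ → ℕ` with `range (u ∘ v) ⊆ A`; that is, iff
`Cont_E(A)` is ¬¬-dense in the monoid `E` of strictly monotone endomaps of `ℕ`. -/
theorem cofinite_iff_contentE_dense (A : Set ℕ) :
    (Aᶜ).Finite ↔
      ∀ u : ℕ → ℕ, StrictMono u →
        ∃ v : ℕ → ℕ, StrictMono v ∧ Set.range (u ∘ v) ⊆ A := by
  constructor
  · intro h u hu
    obtain ⟨N, hN⟩ := h.bddAbove
    -- Since `k ≤ u k`, shifting past a bound `N` of the complement lands in `A`.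
    refine ⟨fun n => n + (N + 1), fun a b hab => Nat.add_lt_add_right hab _, ?_⟩
    rintro _ ⟨n, rfl⟩
    by_contra hA
    have h1 : u (n + (N + 1)) ≤ N := hN hA
    have h2 : n + (N + 1) ≤ u (n + (N + 1)) := hu.le_apply
    omega
  · intro h
    by_contra hinf
    -- If the complement is infinite, its increasing enumeration never meets `A`.
    have hinf' : {n | n ∈ Aᶜ}.Infinite := hinf
    obtain ⟨v, -, hv⟩ := h _ (Nat.nth_strictMono hinf')
    exact Nat.nth_mem_of_infinite hinf' (v 0) (hv ⟨0, rfl⟩)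
end

section
/- Let I be a set of strictly monotone maps ℕ → ℕ such that for every strictly monotone u : ℕ → ℕ there exists a strictly monotone v : ℕ → ℕ with u ∘ v ∈ I. Then the extent Ext(I) = ⋃_{u ∈ I} range(u) is a cofinite subset of ℕ. (Every ¬¬-dense ideal of E is extended.) -/
/-- Every ¬¬-dense ideal of the monoid `E` of strictly monotone endomaps of
`ℕ` is extended: its extent `Ext(I) = ⋃_{u ∈ I} range u` is cofinite. -/
theorem dense_ideal_is_extended (I : Set (ℕ → ℕ))
    (hIE : ∀ u ∈ I, StrictMono u)
    (hdense : ∀ u : ℕ → ℕ, StrictMono u →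
      ∃ v : ℕ → ℕ, StrictMono v ∧ u ∘ v ∈ I) :
    ((⋃ u ∈ I, Set.range u)ᶜ).Finite := by
  by_contra hinf
  -- The increasing enumeration of the infinite complement: every `u ∘ v` takes values outside
  -- the extent, so none of them can lie in `I`.
  obtain ⟨v, -, hv⟩ := hdense _ (Nat.nth_strictMono hinf)
  exact Nat.nth_mem_of_infinite hinf (v 0) (Set.mem_biUnion hv ⟨0, rfl⟩)
end

section
/- For a strictly monotone map u : ℕ → ℕ: the range of u is cofinite (i.e., ℕ \ range(u) is finite) if and only if for every strictly monotone map v : ℕ → ℕ there exists a strictly monotone map w : ℕ → ℕ with range(w) = range(u) ∩ range(v). (That is, F = {u ∈ E : u has a meet with every element of E}, where the order on E is given by range inclusion.) -/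
/-!
The ranges of strictly monotone maps `ℕ → ℕ` are exactly the infinite subsets of `ℕ`
(`exists_strictMono_range_eq`), so the claim says that a set is cofinite iff it meets every
infinite set in an infinite set. A cofinite set does, since removing finitely many elements from an
infinite set leaves it infinite. Conversely, if the complement is infinite then it is
itself an infinite set whose intersection with the given set is empty.
-/

/-- Every infinite set of natural numbers is the range of its increasing enumeration. -/
theorem exists_strictMono_range_eq {s : Set ℕ} (hs : s.Infinite) :
    ∃ w : ℕ → ℕ, StrictMono w ∧ Set.range w = s :=
  ⟨Nat.nth (· ∈ s), Nat.nth_strictMono hs, Nat.range_nth_of_infinite hs⟩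

/-- For a strictly monotone `u : ℕ → ℕ`: `range u` is cofinite iff `u` has a
meet with every element of `E`, i.e. for every strictly monotone `v` there is a
strictly monotone `w` with `range w = range u ∩ range v`. -/
theorem cofinite_range_iff_meets_exist (u : ℕ → ℕ) (hu : StrictMono u) :
    ((Set.range u)ᶜ).Finite ↔
      ∀ v : ℕ → ℕ, StrictMono v →
        ∃ w : ℕ → ℕ, StrictMono w ∧
          Set.range w = Set.range u ∩ Set.range v := by
  constructor
  · intro hfin v hv
    apply exists_strictMono_range_eq
    have h := (Set.infinite_range_of_injective hv.injective).sdiff hfin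
    rwa [Set.sdiff_compl, Set.inter_comm] at h
  · intro h
    by_contra hinf
    obtain ⟨v, hv, hvr⟩ := exists_strictMono_range_eq hinf
    obtain ⟨w, -, hw⟩ := h v hv
    rw [hvr, Set.inter_compl_self] at hw
    exact (Set.range_nonempty w).ne_empty hw
end

section
/- Let L be the set of strictly monotone maps u : ℕ → ℕ whose range has infinite complement in ℕ. Then: (i) L is a two-sided idempotent ideal of E, i.e., for every u ∈ L and every strictly monotone v both u ∘ v ∈ L and v ∘ u ∈ L, and every u ∈ L can be written u = v ∘ w with v, w ∈ L; (ii) for every strictly monotone u with cofinite range and every strictly monotone v, one has u ∘ v ∈ L if and only if v ∈ L; (iii) L is ¬¬-dense in E, i.e., for every strictly monotone u there exists a strictly monotone v with u ∘ v ∈ L. -/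
/-! For injective `u` the complement of the range of a composite splits as
`(range (u ∘ v))ᶜ = (range u)ᶜ ∪ u '' (range v)ᶜ`, so it is infinite iff one of `(range u)ᶜ`,
`(range v)ᶜ` is (`infinite_compl_range_comp`). This yields the ideal property and (ii) at once, and
(iii) follows by taking `v n = 2 * n`, which lies in `L`.

For idempotency, let `u ∈ L` and split the infinite set `(range u)ᶜ` into two infinite pieces `C`
and `D`. Let `v` enumerate `Cᶜ ⊇ range u`; then `u` factors as `v ∘ w`, the map `v` misses `C`, and
`w` misses the preimage of `D`. -/

/-- `L` is the set of strictly monotone maps `ℕ → ℕ` whose range has infinite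
complement. -/
def Lset : Set (ℕ → ℕ) := {u | StrictMono u ∧ ((Set.range u)ᶜ).Infinite}

theorem infinite_compl_range_comp {u v : ℕ → ℕ} (hu : StrictMono u) :
    ((Set.range (u ∘ v))ᶜ).Infinite ↔
      ((Set.range u)ᶜ).Infinite ∨ ((Set.range v)ᶜ).Infinite := by
  have h : (Set.range (u ∘ v))ᶜ = (Set.range u)ᶜ ∪ u '' (Set.range v)ᶜ := by
    have hinj := hu.injective
    ext x
    simp only [Set.mem_compl_iff, Set.mem_range, Set.mem_union, Set.mem_image, Function.comp_apply]
    grind [Function.Injective]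
  rw [h, Set.infinite_union, Set.infinite_image_iff hu.injective.injOn]

theorem exists_strictMono_range_eq_s18 {S : Set ℕ} (hS : S.Infinite) :
    ∃ e : ℕ → ℕ, StrictMono e ∧ Set.range e = S :=
  ⟨Nat.nth (· ∈ S), Nat.nth_strictMono hS, Nat.range_nth_of_infinite hS⟩

theorem double_mem_Lset : (fun n : ℕ => 2 * n) ∈ Lset := by
  refine ⟨fun a b h => by dsimp only; omega, ?_⟩
  refine Set.infinite_of_injective_forall_mem (f := fun n : ℕ => 2 * n + 1)
    (fun a b h => by dsimp only at h; omega) ?_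
  rintro n ⟨m, hm⟩
  dsimp only at hm
  omega

theorem exists_infinite_subset_infinite_diff {A : Set ℕ} (hA : A.Infinite) :
    ∃ C ⊆ A, C.Infinite ∧ (A \ C).Infinite := by
  obtain ⟨e, he, rfl⟩ := exists_strictMono_range_eq_s18 hA
  have hd := double_mem_Lset
  refine ⟨e '' Set.range (fun n : ℕ => 2 * n), Set.image_subset_range _ _, ?_, ?_⟩
  · exact (Set.infinite_range_of_injective hd.1.injective).image he.injective.injOn
  · rw [← Set.image_univ, ← Set.image_sdiff he.injective, ← Set.compl_eq_univ_sdiff]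
    exact hd.2.image he.injective.injOn

theorem exists_strictMono_factor {u v : ℕ → ℕ} (hu : StrictMono u) (hv : StrictMono v)
    (h : Set.range u ⊆ Set.range v) : ∃ w : ℕ → ℕ, StrictMono w ∧ u = v ∘ w := by
  choose w hw using fun n => h (Set.mem_range_self n)
  refine ⟨w, fun a b hab => ?_, funext fun n => (hw n).symm⟩
  rw [← hv.lt_iff_lt, hw, hw]
  exact hu hab

theorem exists_factor_mem_Lset {u : ℕ → ℕ} (hu : u ∈ Lset) :
    ∃ v ∈ Lset, ∃ w ∈ Lset, u = v ∘ w := by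
  obtain ⟨C, hCA, hC, hD⟩ := exists_infinite_subset_infinite_diff hu.2
  have huC : Set.range u ⊆ Cᶜ := Set.subset_compl_comm.mp hCA
  obtain ⟨v, hv, hvr⟩ := exists_strictMono_range_eq_s18
    ((Set.infinite_range_of_injective hu.1.injective).mono huC)
  obtain ⟨w, hw, rfl⟩ := exists_strictMono_factor hu.1 hv (hvr ▸ huC)
  refine ⟨v, ⟨hv, by rwa [hvr, compl_compl]⟩, w, ⟨hw, ?_⟩, rfl⟩
  -- Every point missed by `v ∘ w` but lying outside `C` is the `v`-image of a point missed by `w`.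
  refine Set.Infinite.of_image v (hD.mono ?_)
  rintro x ⟨hx, hxC⟩
  obtain ⟨y, rfl⟩ : x ∈ Set.range v := hvr ▸ hxC
  exact ⟨y, fun ⟨z, hz⟩ => hx ⟨z, congrArg v hz⟩, rfl⟩

/-- (i) `L` is a two-sided idempotent ideal of `E`; (ii) for `u` with cofinite
range, `u ∘ v ∈ L ↔ v ∈ L`; (iii) `L` is ¬¬-dense in `E`. -/
theorem Lset_properties :
    ((∀ u ∈ Lset, ∀ v : ℕ → ℕ, StrictMono v → (u ∘ v ∈ Lset ∧ v ∘ u ∈ Lset)) ∧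
      (∀ u ∈ Lset, ∃ v ∈ Lset, ∃ w ∈ Lset, u = v ∘ w)) ∧
    (∀ u : ℕ → ℕ, StrictMono u → ((Set.range u)ᶜ).Finite →
      ∀ v : ℕ → ℕ, StrictMono v → (u ∘ v ∈ Lset ↔ v ∈ Lset)) ∧
    (∀ u : ℕ → ℕ, StrictMono u → ∃ v : ℕ → ℕ, StrictMono v ∧ u ∘ v ∈ Lset) := by
  refine ⟨⟨fun u hu v hv => ⟨⟨hu.1.comp hv, ?_⟩, hv.comp hu.1, ?_⟩,
    fun u hu => exists_factor_mem_Lset hu⟩, fun u hu hfin v hv => ?_, fun u hu => ?_⟩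
  · exact (infinite_compl_range_comp hu.1).2 (.inl hu.2)
  · exact (infinite_compl_range_comp hv).2 (.inr hu.2)
  · refine ⟨fun h => ⟨hv, ?_⟩, fun h => ⟨hu.comp hv, ?_⟩⟩
    · exact ((infinite_compl_range_comp hu).1 h.2).resolve_left fun h' => h' hfin
    · exact (infinite_compl_range_comp hu).2 (.inr h.2)
  · have hd := double_mem_Lset
    exact ⟨_, hd.1, hu.comp hd.1, (infinite_compl_range_comp hu).2 (.inr hd.2)⟩
end

section
/- Let I be a right ideal of E (a set of strictly monotone maps ℕ → ℕ such that u ∈ I and v strictly monotone imply u ∘ v ∈ I). Then I is ¬¬-dense (for every strictly monotone u there exists a strictly monotone v with u ∘ v ∈ I) if and only if both: (i) the extent Ext(I) = ⋃_{u ∈ I} range(u) is cofinite in ℕ, and (ii) for every strictly monotone v whose range has infinite complement and satisfies range(v) ⊆ Ext(I), there exists w ∈ I with range(w) ⊆ range(v). -/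
/-! If `I` is ¬¬-dense, an infinite complement of the extent could be enumerated by a strictly
monotone map, some restriction of which lies in `I`, which is absurd; the refinement condition is
an instance of density. Conversely, given `u`, restrict it to the even arguments from `2 * (N + 1)`
on, where `N` bounds the complement of the extent. The restriction takes its values in the extent
and misses infinitely many numbers (the values of `u` at odd arguments), so its range contains the
range of some `w ∈ I`. Such a `w` factors as `u ∘ v`, and `v` is strictly monotone since `u` and
`w` are. -/

/-- A right ideal `I` of the monoid `E` of strictly monotone endomaps of `ℕ`
is ¬¬-dense iff (i) its extent is cofinite, and (ii) every `v ∈ L` with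
`range v ⊆ Ext(I)` dominates some `w ∈ I`. -/
theorem dense_iff_extended_and_refines (I : Set (ℕ → ℕ))
    (hIE : ∀ u ∈ I, StrictMono u)
    (hI : ∀ u ∈ I, ∀ v : ℕ → ℕ, StrictMono v → u ∘ v ∈ I) :
    (∀ u : ℕ → ℕ, StrictMono u → ∃ v : ℕ → ℕ, StrictMono v ∧ u ∘ v ∈ I) ↔
      (((⋃ u ∈ I, Set.range u)ᶜ).Finite ∧
        ∀ v : ℕ → ℕ, StrictMono v → ((Set.range v)ᶜ).Infinite →
          Set.range v ⊆ ⋃ u ∈ I, Set.range u →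
            ∃ w ∈ I, Set.range w ⊆ Set.range v) := by
  constructor
  · intro h
    refine ⟨?_, fun v hv _ _ => ?_⟩
    · by_contra hinf
      -- Density at the increasing enumeration of the complement of the extent
      -- yields an element of `I` with values outside the extent.
      have hinf' : (Set.ofPred (· ∈ (⋃ u ∈ I, Set.range u)ᶜ)).Infinite := hinf
      obtain ⟨v, -, hvI⟩ := h _ (Nat.nth_strictMono hinf')
      exact Nat.nth_mem_of_infinite hinf' (v 0)
        (Set.mem_biUnion hvI (Set.mem_range_self 0))
    · obtain ⟨v', -, hI'⟩ := h v hv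
      exact ⟨_, hI', Set.range_comp_subset_range v' v⟩
  · rintro ⟨hfin, href⟩ u hu
    obtain ⟨N, hN⟩ := hfin.bddAbove
    have hs : StrictMono (fun n : ℕ => 2 * (n + N + 1)) := fun a b hab => by
      dsimp only
      omega
    have hinf : ((Set.range (u ∘ fun n => 2 * (n + N + 1)))ᶜ).Infinite := by
      -- The values of `u` at odd arguments are missed.
      refine (Set.infinite_range_of_injective
        (f := fun n => u (2 * n + 1)) fun a b hab => ?_).mono ?_
      · have := hu.injective hab
        omega
      · rintro _ ⟨n, rfl⟩ ⟨m, hm⟩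
        have : 2 * (m + N + 1) = 2 * n + 1 := hu.injective hm
        omega
    have hext : Set.range (u ∘ fun n => 2 * (n + N + 1)) ⊆ ⋃ u ∈ I, Set.range u := by
      -- Every value exceeds `N`, which bounds the complement of the extent.
      rintro _ ⟨n, rfl⟩
      by_contra hn
      have h1 : u (2 * (n + N + 1)) ≤ N := hN hn
      have h2 := hu.le_apply (x := 2 * (n + N + 1))
      omega
    obtain ⟨w, hw, hwr⟩ := href _ (hu.comp hs) hinf hext
    -- `w` factors through `u`, and the factor inherits strict monotonicity.
    choose k hk using fun n => hwr (Set.mem_range_self n)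
    have heq : u ∘ (fun n => 2 * (k n + N + 1)) = w := funext hk
    refine ⟨fun n => 2 * (k n + N + 1), fun a b hab => ?_, heq ▸ hw⟩
    apply hu.lt_iff_lt.mp
    have hlt := hIE w hw hab
    rw [← heq] at hlt
    exact hlt
end
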